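/- arXiv:2411.06200 — 4 statements merged into one kernel-verified Lean document; each statement's English description precedes it below -/
import Mathlib

section
/- There exists an absolute constant C > 0 with the following property. Let X be a finite set, let (B_1, σ_1), …, (B_m, σ_m) be a collection of m bags with B_j ⊆ X and σ_j ∈ ℤ, let ζ ∈ (0,1], let t ≥ 1 be an integer, and let h : X → {0,1} be a classifier whose accuracy on the collection is less than 1 − ζ, i.e., |{j : h(B_j) = σ_j}| < (1 − ζ)·m. Let j_1, …, j_t be i.i.d. uniform on {1,…,m} and let X_1, …, X_t be i.i.d. uniform {0,1}-valued random variables, all independent. Then Pr[ Σ_{i=1}^t X_i·(h(B_{j_i}) − σ_{j_i}) = 0 ] ≤ C/√(ζ·t) + exp(−ζ·t/8). -/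
open Finset

/-!
Let `p > ζ` be the fraction of bags that `h` violates, and let `K` count the violated ones among
the `t` samples. Given the sampled bags, the sum is a random subset sum with exactly `K` nonzero
coefficients, so by the Erdős–Littlewood–Offord theorem (a consequence of Sperner's theorem) it
vanishes with probability at most `2⁻ᴷ (K choose ⌊K/2⌋) ≤ 1 / √(K + 1)`. Since `K` is binomial,
`𝔼[1 / (K + 1)] = ∫₀¹ 𝔼[xᴷ] dx = ∫₀¹ (p x + 1 - p)ᵗ dx ≤ 1 / (p (t + 1))`, and Cauchy–Schwarz gives
`𝔼[1 / √(K + 1)] ≤ 1 / √(ζ (t + 1))`.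
-/

section CentralBinomial

theorem centralBinom_sq_mul_le (n : ℕ) : n.centralBinom ^ 2 * (2 * n + 1) ≤ 16 ^ n := by
  induction n with
  | zero => simp
  | succ n ih =>
    have hrec := Nat.succ_mul_centralBinom_succ n
    refine Nat.le_of_mul_le_mul_left (c := (n + 1) ^ 2) ?_ (by positivity)
    calc (n + 1) ^ 2 * ((n + 1).centralBinom ^ 2 * (2 * (n + 1) + 1))
        = ((n + 1) * (n + 1).centralBinom) ^ 2 * (2 * n + 3) := by ring
      _ = (n.centralBinom ^ 2 * (2 * n + 1)) * (4 * ((2 * n + 1) * (2 * n + 3))) := by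
          rw [hrec]; ring
      _ ≤ 16 ^ n * (16 * (n + 1) ^ 2) := by
          gcongr ?_ * ?_
          nlinarith
      _ = (n + 1) ^ 2 * 16 ^ (n + 1) := by ring

theorem choose_half_sq_mul_le (k : ℕ) : k.choose (k / 2) ^ 2 * (k + 1) ≤ 4 ^ k := by
  rcases Nat.even_or_odd' k with ⟨n, rfl | rfl⟩
  · simpa [Nat.centralBinom, pow_mul] using centralBinom_sq_mul_le n
  · have hhalf : (2 * n + 1) / 2 = n := by lia
    have hcentral : (n + 1).centralBinom = 2 * (2 * n + 1).choose n := by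
      rw [Nat.centralBinom, mul_add_one, Nat.choose_succ_succ, Nat.choose_symm_half, ← two_mul]
    have hpow : 16 ^ (n + 1) = 4 * 4 ^ (2 * n + 1) := by
      rw [pow_succ 4, pow_mul]; ring
    have hbound := centralBinom_sq_mul_le (n + 1)
    rw [hcentral, hpow] at hbound
    rw [hhalf]
    nlinarith [sq_nonneg ((2 * n + 1).choose n)]

end CentralBinomial

section LittlewoodOfford

variable {α G : Type*} [Fintype α]

/-- The subset sum `∑ i, xᵢ dᵢ`, where the coins `x : α → Bool` select the coefficients `dᵢ` that
are added up. -/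
def coinSum [AddCommMonoid G] (d : α → G) (x : α → Bool) : G :=
  ∑ i, if x i then d i else 0

theorem card_filter_eq_le_choose_of_strictMono {β : Type*} [Preorder β] [DecidableEq β]
    {f : Finset α → β} (hf : StrictMono f) (c : β) :
    #{s | f s = c} ≤ (Fintype.card α).choose (Fintype.card α / 2) := by
  refine IsAntichain.sperner fun s hs u hu hne hsub ↦ ?_
  simp only [coe_filter, mem_univ, true_and, Set.mem_ofPred_eq] at hs hu
  exact (hf (hsub.lt_of_ne hne)).ne (hs.trans hu.symm)

variable [AddCommMonoid G] [LinearOrder G] [IsOrderedCancelAddMonoid G]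

theorem strictMono_sum_ite_max_min [DecidableEq α] {d : α → G} (hd : ∀ i, d i ≠ 0) :
    StrictMono fun s : Finset α ↦ ∑ i, if i ∈ s then max (d i) 0 else min (d i) 0 := by
  intro s u hsu
  obtain ⟨j, hju, hjs⟩ := exists_of_ssubset hsu
  refine sum_lt_sum (fun i _ ↦ ?_) ⟨j, mem_univ j, ?_⟩
  · have hi : i ∈ s → i ∈ u := fun h ↦ hsu.subset h
    grind
  · simp [hju, hjs, (hd j).symm]

theorem card_coinSum_eq_le_choose [DecidableEq α] {d : α → G} (hd : ∀ i, d i ≠ 0) (c : G) :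
    #{x | coinSum d x = c} ≤ (Fintype.card α).choose (Fintype.card α / 2) := by
  refine le_trans ?_ (card_filter_eq_le_choose_of_strictMono (strictMono_sum_ite_max_min hd) c)
  -- The coordinates contributing the larger of their two possible values `0` and `d i`.
  let raised (x : α → Bool) : Finset α := {i | x i = decide (0 < d i)}
  refine card_le_card_of_injOn raised (fun x hx ↦ ?_) (fun x _ y _ hxy ↦ ?_)
  · have hterm (i : α) : (if i ∈ raised x then max (d i) 0 else min (d i) 0) =
        if x i then d i else 0 := by
      rcases lt_or_gt_of_ne (hd i) with hi | hi <;> cases hxi : x i <;>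
        simp [raised, hxi, hi, hi.le, hi.not_gt]
    simpa [hterm, coinSum] using (mem_filter.mp hx).2
  · funext i
    have hi : x i = decide (0 < d i) ↔ y i = decide (0 < d i) := by
      simpa [raised] using Finset.ext_iff.mp hxy i
    by_cases hxi : x i = decide (0 < d i)
    · rw [hxi, hi.mp hxi]
    · rw [Bool.eq_not_of_ne hxi, Bool.eq_not_of_ne (mt hi.mpr hxi)]

theorem card_coinSum_eq_le_choose_mul_two_pow [DecidableEq α] (d : α → G) (c : G) :
    #{x | coinSum d x = c} ≤
      (#{i | d i ≠ 0}).choose (#{i | d i ≠ 0} / 2) * 2 ^ #{i | d i = 0} := by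
  have hsplit (x : α → Bool) : coinSum d x =
      coinSum (fun i : {i // d i ≠ 0} ↦ d i) (fun i ↦ x i) := by
    unfold coinSum
    rw [← Fintype.sum_subtype_add_sum_subtype (fun i ↦ d i ≠ 0), add_eq_left]
    exact sum_eq_zero fun i _ ↦ by simp [not_not.mp i.2]
  calc #{x | coinSum d x = c}
      ≤ #(({y | coinSum (fun i : {i // d i ≠ 0} ↦ d i) y = c} : Finset _) ×ˢ
          (univ : Finset ({i // ¬ d i ≠ 0} → Bool))) :=
        card_le_card_of_injOn (Equiv.piEquivPiSubtypeProd (fun i ↦ d i ≠ 0) fun _ ↦ Bool)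
          (fun x hx ↦ by simpa [hsplit] using hx) (Equiv.injective _).injOn
    _ ≤ (#{i | d i ≠ 0}).choose (#{i | d i ≠ 0} / 2) * 2 ^ #{i | d i = 0} := by
        rw [card_product, ← Fintype.card_subtype fun i ↦ d i ≠ 0]
        gcongr
        · exact card_coinSum_eq_le_choose (fun i : {i // d i ≠ 0} ↦ i.2) c
        · simp [Fintype.card_subtype]

theorem card_coinSum_eq_sq_le [DecidableEq α] (d : α → G) (c : G) :
    (#{x | coinSum d x = c} : ℝ) ^ 2 ≤ 4 ^ Fintype.card α * (1 / (#{i | d i ≠ 0} + 1)) := by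
  set k := #{i | d i ≠ 0}
  set l := #{i | d i = 0}
  have hcard : Fintype.card α = k + l := by
    rw [add_comm]
    exact (card_filter_add_card_filter_not fun i ↦ d i = 0).symm
  have hcount : (#{x | coinSum d x = c} : ℝ) ≤ k.choose (k / 2) * 2 ^ l := by
    exact_mod_cast card_coinSum_eq_le_choose_mul_two_pow d c
  have hchoose : (k.choose (k / 2) : ℝ) ^ 2 * (k + 1) ≤ 4 ^ k := by
    exact_mod_cast choose_half_sq_mul_le k
  rw [mul_one_div, le_div_iff₀ (by positivity), hcard]
  calc (#{x | coinSum d x = c} : ℝ) ^ 2 * (k + 1)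
      ≤ ((k.choose (k / 2) : ℝ) * 2 ^ l) ^ 2 * (k + 1) := by gcongr
    _ = (k.choose (k / 2) : ℝ) ^ 2 * (k + 1) * 4 ^ l := by
        rw [mul_pow, pow_right_comm 2 l 2]
        ring
    _ ≤ 4 ^ k * 4 ^ l := by gcongr
    _ = 4 ^ (k + l) := (pow_add ..).symm

end LittlewoodOfford

section RandomIndices

variable {ι τ : Type*} [Fintype ι] [Fintype τ] [DecidableEq τ]

theorem sum_pow_card_filter {R : Type*} [CommSemiring R] (P : ι → Prop) [DecidablePred P] (x : R) :
    ∑ j : τ → ι, x ^ #{i | P (j i)} = (#{a | P a} * x + #{a | ¬ P a}) ^ Fintype.card τ := by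
  calc ∑ j : τ → ι, x ^ #{i | P (j i)}
      = ∑ j : τ → ι, ∏ i, if P (j i) then x else 1 := by simp [prod_ite]
    _ = (∑ a, if P a then x else 1) ^ Fintype.card τ := by
        simpa using (prod_univ_sum (fun _ : τ ↦ univ) fun _ a ↦ if P a then x else 1).symm
    _ = (#{a | P a} * x + #{a | ¬ P a}) ^ Fintype.card τ := by simp [sum_ite]

theorem sum_one_div_card_filter_add_one_le (P : ι → Prop) [DecidablePred P] (hP : ∃ a, P a) :
    ∑ j : τ → ι, (1 / (#{i | P (j i)} + 1) : ℝ) ≤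
      (Fintype.card ι : ℝ) ^ (Fintype.card τ + 1) / (#{a | P a} * (Fintype.card τ + 1)) := by
  set b := #{a | P a} with hb
  set g := #{a | ¬ P a}
  have hb_ne : (b : ℝ) ≠ 0 := by
    simpa [hb, filter_eq_empty_iff] using hP
  have hbg : (b : ℝ) + g = Fintype.card ι := by
    exact_mod_cast card_filter_add_card_filter_not P
  calc ∑ j : τ → ι, (1 / (#{i | P (j i)} + 1) : ℝ)
      = ∑ j : τ → ι, ∫ x in (0 : ℝ)..1, x ^ #{i | P (j i)} := by simp
    _ = ∫ x in (0 : ℝ)..1, (b * x + g) ^ Fintype.card τ := by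
        rw [← intervalIntegral.integral_finsetSum fun j _ ↦
          (continuous_pow _).intervalIntegrable _ _]
        exact intervalIntegral.integral_congr fun x _ ↦ sum_pow_card_filter P x
    _ = ((Fintype.card ι : ℝ) ^ (Fintype.card τ + 1) - g ^ (Fintype.card τ + 1)) /
          (b * (Fintype.card τ + 1)) := by
        rw [intervalIntegral.integral_comp_mul_add (fun y : ℝ ↦ y ^ Fintype.card τ) hb_ne,
          integral_pow, mul_one, hbg, mul_zero, zero_add, smul_eq_mul, inv_mul_eq_div, div_div,
          mul_comm (b : ℝ)]
    _ ≤ (Fintype.card ι : ℝ) ^ (Fintype.card τ + 1) / (b * (Fintype.card τ + 1)) := by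
        gcongr
        exact sub_le_self _ (by positivity)

end RandomIndices

section Amplification

variable {ι τ G : Type*} [Fintype ι] [Fintype τ] [DecidableEq τ] [AddCommMonoid G]

theorem natCard_coinSum_comp_eq [DecidableEq G] (d : ι → G) (c : G) :
    Nat.card {p : (τ → ι) × (τ → Bool) // coinSum (d ∘ p.1) p.2 = c} =
      ∑ j : τ → ι, #{x | coinSum (d ∘ j) x = c} := by
  rw [Nat.card_eq_fintype_card, Fintype.card_subtype, card_filter, Fintype.sum_prod_type]
  simp only [← card_filter]

variable [LinearOrder G] [IsOrderedCancelAddMonoid G]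

theorem sq_sum_card_coinSum_comp_eq_le (d : ι → G) (hd : ∃ a, d a ≠ 0) (c : G) :
    (∑ j : τ → ι, (#{x | coinSum (d ∘ j) x = c} : ℝ)) ^ 2 ≤
      (Fintype.card ι ^ Fintype.card τ * 2 ^ Fintype.card τ) ^ 2 *
        (Fintype.card ι / (#{a | d a ≠ 0} * (Fintype.card τ + 1))) := by
  set m := Fintype.card ι with hm
  set t := Fintype.card τ with ht
  calc (∑ j : τ → ι, (#{x | coinSum (d ∘ j) x = c} : ℝ)) ^ 2
      ≤ (m : ℝ) ^ t * ∑ j : τ → ι, (#{x | coinSum (d ∘ j) x = c} : ℝ) ^ 2 := by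
        simpa [hm, ht] using sq_sum_le_card_mul_sum_sq (s := (univ : Finset (τ → ι)))
          (f := fun j ↦ (#{x | coinSum (d ∘ j) x = c} : ℝ))
    _ ≤ (m : ℝ) ^ t * ∑ j : τ → ι, 4 ^ t * (1 / (#{i | d (j i) ≠ 0} + 1) : ℝ) := by
        gcongr with j
        exact card_coinSum_eq_sq_le (d ∘ j) c
    _ ≤ (m : ℝ) ^ t * (4 ^ t * (m ^ (t + 1) / (#{a | d a ≠ 0} * (t + 1)))) := by
        rw [← mul_sum]
        gcongr
        exact sum_one_div_card_filter_add_one_le (d · ≠ 0) hd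
    _ = ((m : ℝ) ^ t * 2 ^ t) ^ 2 * (m / (#{a | d a ≠ 0} * (t + 1))) := by
        rw [mul_pow, pow_right_comm 2 t 2]
        ring

theorem error_amplification_general (d : ι → G) (c : G) {ζ : ℝ} (hζ : 0 < ζ)
    (hd : (#{a | d a = 0} : ℝ) < (1 - ζ) * Fintype.card ι) :
    (Nat.card {p : (τ → ι) × (τ → Bool) // coinSum (d ∘ p.1) p.2 = c} : ℝ) /
        (Fintype.card ((τ → ι) × (τ → Bool)) : ℝ) ≤
      1 / √(ζ * (Fintype.card τ + 1)) := by
  set b := #{a | d a ≠ 0} with hb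
  have hζb : ζ * Fintype.card ι < b := by
    have hsum : (#{a | d a = 0} : ℝ) + b = Fintype.card ι := by
      exact_mod_cast card_filter_add_card_filter_not fun a ↦ d a = 0
    linarith
  have hb_pos : (0 : ℝ) < b := hζb.trans_le' (by positivity)
  have hd_ne : ∃ a, d a ≠ 0 := by
    simpa [hb, card_pos, filter_nonempty_iff] using hb_pos
  have : Nonempty ι := ⟨hd_ne.choose⟩
  have hratio : (Fintype.card ι : ℝ) / (b * (Fintype.card τ + 1)) ≤
      (ζ * (Fintype.card τ + 1))⁻¹ := by
    rw [← one_div, div_le_div_iff₀ (by positivity) (by positivity)]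
    nlinarith
  rw [one_div, ← Real.sqrt_inv]
  refine Real.le_sqrt_of_sq_le ?_
  rw [div_pow, div_le_iff₀' (by positivity), natCard_coinSum_comp_eq, Nat.cast_sum]
  refine (sq_sum_card_coinSum_comp_eq_le d hd_ne c).trans ?_
  simp only [Fintype.card_prod, Fintype.card_fun, Fintype.card_bool, Nat.cast_mul, Nat.cast_pow,
    Nat.cast_ofNat]
  gcongr

end Amplification

/-- Error amplification (Lemma 4): there is an absolute constant `C > 0` such that for any
collection of bags `(B_j, σ_j)` on a finite set `X` and any classifier `h : X → {0,1}` with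
accuracy less than `1 - ζ`, the probability (over i.i.d. uniform indices `j_1,…,j_t` and
i.i.d. fair coins `X_1,…,X_t`) that `∑_i X_i (h(B_{j_i}) - σ_{j_i}) = 0` is at most
`C/√(ζ t) + exp (-ζ t / 8)`. -/
theorem error_amplification :
    ∃ C : ℝ, 0 < C ∧
      ∀ (X : Type) [Fintype X] (m : ℕ) (B : Fin m → Finset X) (σ : Fin m → ℤ)
        (ζ : ℝ), 0 < ζ → ζ ≤ 1 → ∀ t : ℕ, 1 ≤ t →
        ∀ h : X → ℕ, (∀ x, h x ≤ 1) →
        ((Finset.univ.filter fun j : Fin m => (∑ x ∈ B j, (h x : ℤ)) = σ j).card : ℝ)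
          < (1 - ζ) * m →
        ((Nat.card {p : (Fin t → Fin m) × (Fin t → Bool) //
            (∑ i, if p.2 i then (∑ x ∈ B (p.1 i), (h x : ℤ)) - σ (p.1 i) else 0) = 0}) : ℝ)
          / (Fintype.card ((Fin t → Fin m) × (Fin t → Bool)) : ℝ)
          ≤ C / Real.sqrt (ζ * t) + Real.exp (-(ζ * t) / 8) := by
  refine ⟨1, one_pos, fun X _ m B σ ζ hζ _ t ht h _ hacc ↦ ?_⟩
  have hprob := error_amplification_general (τ := Fin t)
    (fun j ↦ (∑ x ∈ B j, (h x : ℤ)) - σ j) 0 hζ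
    (by simpa only [sub_eq_zero, Fintype.card_fin] using hacc)
  refine hprob.trans (le_add_of_le_of_nonneg ?_ (Real.exp_pos _).le)
  rw [Fintype.card_fin]
  gcongr
  exact le_add_of_nonneg_right zero_le_one
end

section
/- There exists an absolute constant C > 0 with the following property. Let X be a finite set, let (B_1, σ_1), …, (B_m, σ_m) be a collection of m bags with B_j ⊆ X and σ_j ∈ ℤ, let ε, α ∈ (0,1), and let t be an integer with t ≥ (32/ε)·(C/α)². If a classifier h : X → {0,1} satisfies Pr[ Σ_{i=1}^t X_i·(h(B_{j_i}) − σ_{j_i}) = 0 ] ≥ α, where j_1,…,j_t are i.i.d. uniform on {1,…,m} and X_1,…,X_t are i.i.d. uniform {0,1}-valued and all are independent, then |{j ∈ {1,…,m} : h(B_j) = σ_j}| ≥ (1 − ε)·m. -/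
open Finset

/-!
Fix `h` and let `w j = h(B_j) - σ_j`. For fixed indices `j₁, …, jₜ`, of which `k` have `w ≠ 0`,
the Erdős–Littlewood–Offord theorem says that at most a fraction `(k + 1)^(-1/2)` of the coin
sequences make the selected weights sum to `0`. By Cauchy–Schwarz, the probability of satisfying a
random large bag is therefore at most the square root of `𝔼[1 / (k + 1)]`, where `k` is binomial
with parameters `t` and `q`, the fraction of bags that `h` violates. To bound this expectation, draw
`t + 1` indices and give each violated one the reciprocal of the number of violated ones: the total
is at most `1`, while each index contributes `q 𝔼[1 / (k + 1)]` on average. So a success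
probability of at least `α` forces `(t + 1) q α² ≤ 1`.
-/

theorem two_mul_add_one_mul_centralBinom_sq_le (n : ℕ) :
    (2 * n + 1) * n.centralBinom ^ 2 ≤ 16 ^ n := by
  induction n with
  | zero => simp
  | succ n ih =>
    refine Nat.le_of_mul_le_mul_left (c := (n + 1) ^ 2) ?_ (by positivity)
    calc (n + 1) ^ 2 * ((2 * (n + 1) + 1) * (n + 1).centralBinom ^ 2)
        = (2 * n + 3) * ((n + 1) * (n + 1).centralBinom) ^ 2 := by ring
      _ = 4 * ((2 * n + 3) * (2 * n + 1)) * ((2 * n + 1) * n.centralBinom ^ 2) := by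
          rw [Nat.succ_mul_centralBinom_succ]; ring
      _ ≤ 4 * (4 * (n + 1) ^ 2) * 16 ^ n := by
          gcongr 4 * ?_ * ?_
          nlinarith
      _ = (n + 1) ^ 2 * 16 ^ (n + 1) := by ring

theorem succ_mul_choose_half_sq_le (n : ℕ) : (n + 1) * n.choose (n / 2) ^ 2 ≤ 4 ^ n := by
  obtain ⟨k, rfl | rfl⟩ := n.even_or_odd'
  · rw [Nat.mul_div_cancel_left k two_pos, pow_mul, ← Nat.centralBinom_eq_two_mul_choose]
    exact two_mul_add_one_mul_centralBinom_sq_le k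
  · have centralBinom_succ : (k + 1).centralBinom = 2 * (2 * k + 1).choose k := by
      rw [Nat.centralBinom_eq_two_mul_choose, mul_add_one, Nat.choose_succ_succ,
        Nat.choose_symm_half, two_mul ((2 * k + 1).choose k)]
    have bound := two_mul_add_one_mul_centralBinom_sq_le (k + 1)
    have four_pow : (4 : ℕ) ^ (2 * k + 1) * 4 = 16 ^ (k + 1) := by
      rw [← pow_succ, show 2 * k + 1 + 1 = 2 * (k + 1) by ring, pow_mul]; norm_num
    rw [centralBinom_succ, ← four_pow] at bound
    rw [show (2 * k + 1) / 2 = k by lia]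
    nlinarith

section Selections

variable {ι R : Type*} [Fintype ι] [DecidableEq ι] [AddCommMonoid R] [DecidableEq R]

/-- The `0`-`1` selections `x` of the weights `w` whose subset sum is `c`: the set counted in the
Littlewood–Offord problem. Selections are `Bool`-valued functions, to model sequences of coins. -/
def selectionsWithSum (w : ι → R) (c : R) : Finset (ι → Bool) :=
  {x | ∑ i, (if x i then w i else 0) = c}

theorem mem_selectionsWithSum {w : ι → R} {c : R} {x : ι → Bool} :
    x ∈ selectionsWithSum w c ↔ ∑ i, (if x i then w i else 0) = c := by
  simp [selectionsWithSum]

theorem card_selectionsWithSum_le_mul_two_pow (w : ι → R) (c : R) :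
    #(selectionsWithSum w c) ≤
      #(selectionsWithSum (fun i : {i // w i ≠ 0} => w i) c) * 2 ^ #{i | w i = 0} := by
  let splitEquiv := Equiv.piEquivPiSubtypeProd (fun i => w i ≠ 0) fun _ => Bool
  have maps : ∀ x ∈ selectionsWithSum w c, splitEquiv x ∈
      selectionsWithSum (fun i : {i // w i ≠ 0} => w i) c ×ˢ univ := by
    intro x hx
    have rest : ∑ i : {i // ¬ w i ≠ 0}, (if x i then w i else 0) = 0 :=
      sum_eq_zero fun i _ => by rw [not_not.mp i.2, ite_self]
    rw [mem_selectionsWithSum, ← Fintype.sum_subtype_add_sum_subtype (fun i => w i ≠ 0), rest,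
      add_zero] at hx
    simpa [splitEquiv, mem_selectionsWithSum] using hx
  calc #(selectionsWithSum w c)
      ≤ #(selectionsWithSum (fun i : {i // w i ≠ 0} => w i) c ×ˢ
          (univ : Finset ({i // ¬ w i ≠ 0} → Bool))) :=
        card_le_card_of_injOn splitEquiv maps splitEquiv.injective.injOn
    _ = _ := by
        simp only [card_product, card_univ, Fintype.card_fun, Fintype.card_bool,
          Fintype.card_subtype, ne_eq, not_not]

end Selections

section LittlewoodOfford

variable {ι R : Type*} [Fintype ι] [AddCommGroup R] [LinearOrder R]

/-- The set of indices where the selection `x` agrees with selecting exactly the positive weights.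
Passing to it replaces the weights by their absolute values, up to a translation of the sum. -/
def signAgreement (w : ι → R) (x : ι → Bool) : Finset ι := {i | x i = true ↔ 0 < w i}

theorem signAgreement_injective (w : ι → R) : Function.Injective (signAgreement w) := by
  intro x y hxy
  funext i
  have agree : (x i = true ↔ 0 < w i) ↔ (y i = true ↔ 0 < w i) := by
    simpa [signAgreement] using Finset.ext_iff.mp hxy i
  grind

theorem sum_abs_signAgreement [IsOrderedAddMonoid R] (w : ι → R) (x : ι → Bool) :
    ∑ i ∈ signAgreement w x, |w i| = ∑ i, (if x i then w i else 0) + ∑ i, (w i)⁻ := by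
  rw [signAgreement, sum_filter, ← sum_add_distrib]
  refine sum_congr rfl fun i _ => ?_
  rcases le_or_gt (w i) 0 with hi | hi
  · cases x i <;> simp [hi, hi.not_gt, abs_of_nonpos]
  · cases x i <;> simp [hi, hi.le, abs_of_pos]

variable [DecidableEq ι] [IsOrderedAddMonoid R]

theorem isAntichain_image_signAgreement {w : ι → R} (hw : ∀ i, w i ≠ 0) (c : R) :
    IsAntichain (· ⊆ ·)
      (↑((selectionsWithSum w c).image (signAgreement w)) : Set (Finset ι)) := by
  simp only [coe_image]
  rintro _ ⟨x, hx, rfl⟩ _ ⟨y, hy, rfl⟩ hne hsub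
  obtain ⟨i, hiy, hix⟩ := exists_of_ssubset (hsub.ssubset_of_ne hne)
  have sum_lt : ∑ i ∈ signAgreement w x, |w i| < ∑ i ∈ signAgreement w y, |w i| :=
    sum_lt_sum_of_subset hsub hiy hix (abs_pos.mpr (hw i)) fun _ _ _ => abs_nonneg _
  rw [sum_abs_signAgreement, sum_abs_signAgreement, mem_selectionsWithSum.mp hx,
    mem_selectionsWithSum.mp hy] at sum_lt
  exact lt_irrefl _ sum_lt

theorem card_selectionsWithSum_le_choose {w : ι → R} (hw : ∀ i, w i ≠ 0) (c : R) :
    #(selectionsWithSum w c) ≤ (Fintype.card ι).choose (Fintype.card ι / 2) := by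
  rw [← card_image_of_injective _ (signAgreement_injective w)]
  exact (isAntichain_image_signAgreement hw c).sperner

theorem card_selectionsWithSum_sq_mul_succ_le (w : ι → R) (c : R) :
    #(selectionsWithSum w c) ^ 2 * (#{i | w i ≠ 0} + 1) ≤ 4 ^ Fintype.card ι := by
  set k := #{i | w i ≠ 0} with hk
  set l := #{i | w i = 0}
  have card_add : k + l = Fintype.card ι := by
    rw [add_comm]
    exact card_filter_add_card_filter_not (fun i => w i = 0)
  have card_le : #(selectionsWithSum w c) ≤ k.choose (k / 2) * 2 ^ l := by
    refine (card_selectionsWithSum_le_mul_two_pow w c).trans (Nat.mul_le_mul_right _ ?_)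
    simpa only [Fintype.card_subtype, ← hk] using
      card_selectionsWithSum_le_choose (fun i : {i // w i ≠ 0} => i.2) c
  calc #(selectionsWithSum w c) ^ 2 * (k + 1)
      ≤ (k.choose (k / 2) * 2 ^ l) ^ 2 * (k + 1) := by gcongr
    _ = (k + 1) * k.choose (k / 2) ^ 2 * 4 ^ l := by
        rw [show 4 = 2 ^ 2 by rfl, ← pow_mul]; ring
    _ ≤ 4 ^ k * 4 ^ l := by gcongr; exact succ_mul_choose_half_sq_le k
    _ = 4 ^ Fintype.card ι := by rw [← pow_add, card_add]

end LittlewoodOfford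

section SizeBiasing

variable {ι : Type*} [Fintype ι] (𝕜 : Type*) [Field 𝕜]

theorem sum_ite_inv_card_eq_card_mul_sum_inv (P : ι → Prop) [DecidablePred P] (t : ℕ)
    (i : Fin (t + 1)) :
    ∑ f : Fin (t + 1) → ι, (if P (f i) then (#{k | P (f k)} : 𝕜)⁻¹ else 0) =
      #{a | P a} * ∑ j : Fin t → ι, (#{k | P (j k)} + 1 : 𝕜)⁻¹ := by
  rw [← (Fin.insertNthEquiv (fun _ => ι) i).sum_comp, Fintype.sum_prod_type, ← nsmul_eq_mul,
    ← sum_const, sum_filter]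
  refine sum_congr rfl fun a _ => ?_
  by_cases ha : P a
  · have card_insert (j : Fin t → ι) :
        #{k | P (i.insertNth (α := fun _ => ι) a j k)} = #{k | P (j k)} + 1 := by
      rw [card_filter, card_filter, Fin.sum_univ_succAbove _ i]
      simp [ha, add_comm]
    simp only [Fin.insertNthEquiv_apply, Fin.insertNth_apply_same, if_pos ha, card_insert,
      Nat.cast_add_one]
  · simp [Fin.insertNthEquiv, ha]

theorem succ_mul_card_mul_sum_inv_le [LinearOrder 𝕜] [IsStrictOrderedRing 𝕜] (P : ι → Prop)
    [DecidablePred P] (t : ℕ) :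
    (t + 1) * #{a | P a} * ∑ j : Fin t → ι, (#{k | P (j k)} + 1 : 𝕜)⁻¹ ≤
      Fintype.card ι ^ (t + 1) := by
  calc (t + 1) * #{a | P a} * ∑ j : Fin t → ι, (#{k | P (j k)} + 1 : 𝕜)⁻¹
      = ∑ i : Fin (t + 1), ∑ f : Fin (t + 1) → ι,
          if P (f i) then (#{k | P (f k)} : 𝕜)⁻¹ else 0 := by
        simp [sum_ite_inv_card_eq_card_mul_sum_inv, mul_assoc]
    _ = ∑ f : Fin (t + 1) → ι, (#{k | P (f k)} : 𝕜) * (#{k | P (f k)} : 𝕜)⁻¹ := by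
        rw [sum_comm]
        simp [← sum_filter]
    _ ≤ ∑ _f : Fin (t + 1) → ι, 1 := sum_le_sum fun f _ => mul_inv_le_one
    _ = Fintype.card ι ^ (t + 1) := by simp

end SizeBiasing

section LargeBags

theorem natCard_pairs_eq_sum_card_selectionsWithSum {ι R : Type*} [Fintype ι] [AddCommMonoid R]
    [DecidableEq R] (w : ι → R) (t : ℕ) (c : R) :
    Nat.card {p : (Fin t → ι) × (Fin t → Bool) // ∑ i, (if p.2 i then w (p.1 i) else 0) = c} =
      ∑ j : Fin t → ι, #(selectionsWithSum (fun i => w (j i)) c) := by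
  simp only [Nat.card_eq_fintype_card, Fintype.card_subtype, card_filter, Fintype.sum_prod_type,
    selectionsWithSum]

variable {ι R : Type*} [Fintype ι] [AddCommGroup R] [LinearOrder R] [IsOrderedAddMonoid R]

theorem succ_mul_card_mul_sum_card_selectionsWithSum_sq_le (w : ι → R) (t : ℕ) (c : R) :
    ((t : ℝ) + 1) * #{a | w a ≠ 0} *
        (∑ j : Fin t → ι, (#(selectionsWithSum (fun i => w (j i)) c) : ℝ)) ^ 2 ≤
      Fintype.card ι * ((Fintype.card ι : ℝ) ^ t * 2 ^ t) ^ 2 := by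
  set N : (Fin t → ι) → ℝ := fun j => #(selectionsWithSum (fun i => w (j i)) c)
  set K : (Fin t → ι) → ℝ := fun j => #{k | w (j k) ≠ 0}
  have littlewood_offord (j : Fin t → ι) : N j ^ 2 ≤ 4 ^ t * (K j + 1)⁻¹ := by
    simp only [N, K]
    rw [← div_eq_mul_inv, le_div_iff₀ (by positivity)]
    have card_le := card_selectionsWithSum_sq_mul_succ_le (fun i => w (j i)) c
    rw [Fintype.card_fin] at card_le
    exact_mod_cast card_le
  have cauchy_schwarz : (∑ j, N j) ^ 2 ≤ Fintype.card ι ^ t * ∑ j, N j ^ 2 := by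
    simpa using sq_sum_le_card_mul_sum_sq (s := univ) (f := N)
  calc ((t : ℝ) + 1) * #{a | w a ≠ 0} * (∑ j, N j) ^ 2
      ≤ (t + 1) * #{a | w a ≠ 0} * (Fintype.card ι ^ t * ∑ j, 4 ^ t * (K j + 1)⁻¹) := by
        gcongr
        exact cauchy_schwarz.trans (by gcongr with j; exact littlewood_offord j)
    _ = Fintype.card ι ^ t * 4 ^ t * ((t + 1) * #{a | w a ≠ 0} * ∑ j, (K j + 1)⁻¹) := by
        rw [← mul_sum]; ring
    _ ≤ Fintype.card ι ^ t * 4 ^ t * Fintype.card ι ^ (t + 1) := by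
        gcongr
        exact succ_mul_card_mul_sum_inv_le ℝ (fun a => w a ≠ 0) t
    _ = Fintype.card ι * ((Fintype.card ι : ℝ) ^ t * 2 ^ t) ^ 2 := by
        rw [show (4 : ℝ) = 2 ^ 2 by norm_num, ← pow_mul]; ring

theorem succ_mul_sq_mul_card_ne_zero_le (w : ι → R) (t : ℕ) (c : R) {α : ℝ} (hα : 0 ≤ α)
    (hp : α ≤ (Nat.card {p : (Fin t → ι) × (Fin t → Bool) //
        ∑ i, (if p.2 i then w (p.1 i) else 0) = c} : ℝ) /
      (Fintype.card ((Fin t → ι) × (Fin t → Bool)) : ℝ)) :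
    ((t : ℝ) + 1) * α ^ 2 * #{a | w a ≠ 0} ≤ Fintype.card ι := by
  rcases isEmpty_or_nonempty ι with hι | hι
  · simp
  set T : ℝ := (Fintype.card ι : ℝ) ^ t * 2 ^ t
  have T_pos : 0 < T := by positivity
  have count : α * T ≤ ∑ j : Fin t → ι, (#(selectionsWithSum (fun i => w (j i)) c) : ℝ) := by
    have card_pairs : (Fintype.card ((Fin t → ι) × (Fin t → Bool)) : ℝ) = T := by simp [T]
    rw [card_pairs, le_div_iff₀ T_pos, natCard_pairs_eq_sum_card_selectionsWithSum] at hp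
    exact_mod_cast hp
  refine le_of_mul_le_mul_right ?_ (pow_pos T_pos 2)
  calc ((t : ℝ) + 1) * α ^ 2 * #{a | w a ≠ 0} * T ^ 2
      = (t + 1) * #{a | w a ≠ 0} * (α * T) ^ 2 := by ring
    _ ≤ (t + 1) * #{a | w a ≠ 0} *
          (∑ j : Fin t → ι, (#(selectionsWithSum (fun i => w (j i)) c) : ℝ)) ^ 2 := by gcongr
    _ ≤ Fintype.card ι * T ^ 2 := succ_mul_card_mul_sum_card_selectionsWithSum_sq_le w t c

theorem weak_to_strong_llp_general {X : Type*} (B : ι → Finset X) (σ : ι → R) (h : X → R)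
    {ε α : ℝ} (hα : 0 ≤ α) {t : ℕ} (ht : 1 ≤ ((t : ℝ) + 1) * (ε * α ^ 2))
    (hp : α ≤ (Nat.card {p : (Fin t → ι) × (Fin t → Bool) //
        ∑ i, (if p.2 i then (∑ x ∈ B (p.1 i), h x) - σ (p.1 i) else 0) = 0} : ℝ) /
      (Fintype.card ((Fin t → ι) × (Fin t → Bool)) : ℝ)) :
    (1 - ε) * Fintype.card ι ≤ #{j | ∑ x ∈ B j, h x = σ j} := by
  have violated_le :=
    succ_mul_sq_mul_card_ne_zero_le (fun j => (∑ x ∈ B j, h x) - σ j) t 0 hα hp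
  simp only [ne_eq, sub_eq_zero] at violated_le
  have card_add : (#{j | ∑ x ∈ B j, h x = σ j} : ℝ) + #{j | ¬ ∑ x ∈ B j, h x = σ j} =
      Fintype.card ι := by
    exact_mod_cast card_filter_add_card_filter_not (s := univ) _
  have scale_pos : 0 < ((t : ℝ) + 1) * α ^ 2 := by
    have α_ne_zero : α ≠ 0 := by rintro rfl; norm_num at ht
    positivity
  have violated_le_eps : (#{j | ¬ ∑ x ∈ B j, h x = σ j} : ℝ) ≤ ε * Fintype.card ι := by
    refine le_of_mul_le_mul_left ?_ scale_pos
    calc ((t : ℝ) + 1) * α ^ 2 * #{j | ¬ ∑ x ∈ B j, h x = σ j}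
        ≤ 1 * Fintype.card ι := by rwa [one_mul]
      _ ≤ (t + 1) * (ε * α ^ 2) * Fintype.card ι := by gcongr
      _ = (t + 1) * α ^ 2 * (ε * Fintype.card ι) := by ring
  linarith

end LargeBags

/-- Weak-to-strong guarantee (analysis of algorithm `𝒜₁`): there is an absolute constant
`C > 0` such that whenever `t ≥ (32/ε)·(C/α)²`, any classifier `h : X → {0,1}` that satisfies
a random large bag (formed from `t` i.i.d. uniform bag indices and `t` i.i.d. fair coins)
with probability at least `α` must satisfy at least a `(1 - ε)`-fraction of the original
bags `(B_j, σ_j)`. -/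
theorem weak_to_strong_llp :
    ∃ C : ℝ, 0 < C ∧
      ∀ (X : Type) [Fintype X] (m : ℕ) (B : Fin m → Finset X) (σ : Fin m → ℤ)
        (ε α : ℝ), 0 < ε → ε < 1 → 0 < α → α < 1 →
        ∀ t : ℕ, (32 / ε) * (C / α) ^ 2 ≤ (t : ℝ) →
        ∀ h : X → ℕ, (∀ x, h x ≤ 1) →
        α ≤ ((Nat.card {p : (Fin t → Fin m) × (Fin t → Bool) //
            (∑ i, if p.2 i then (∑ x ∈ B (p.1 i), (h x : ℤ)) - σ (p.1 i) else 0) = 0}) : ℝ)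
          / (Fintype.card ((Fin t → Fin m) × (Fin t → Bool)) : ℝ) →
        (1 - ε) * m ≤
          ((Finset.univ.filter fun j : Fin m => (∑ x ∈ B j, (h x : ℤ)) = σ j).card : ℝ) := by
  refine ⟨1, one_pos, fun X _ m B σ ε α hε _ hα _ t ht h _ hp => ?_⟩
  have scale : 1 ≤ ((t : ℝ) + 1) * (ε * α ^ 2) := by
    rw [show 32 / ε * (1 / α) ^ 2 = 32 / (ε * α ^ 2) by field_simp,
      div_le_iff₀ (by positivity)] at ht
    nlinarith [mul_pos hε (pow_pos hα 2)]
  simpa using weak_to_strong_llp_general B σ (fun x => (h x : ℤ)) hα.le scale hp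
end

section
/- Let α ∈ (1/2, 1). Identify points of the unit circle with the additive circle ℝ/2πℤ. For each midpoint φ ∈ ℝ/2πℤ, the 0-bag with midpoint φ has endpoints φ − (1−α)π/2 and φ + (1−α)π/2, and the 1-bag with midpoint φ has endpoints φ − απ/2 and φ + απ/2. Given a classifier f : ℝ/2πℤ → {0,1}, say f satisfies the 0-bag with midpoint φ iff f(φ − (1−α)π/2) = 0 and f(φ + (1−α)π/2) = 0, and f satisfies the 1-bag with midpoint φ iff f(φ − απ/2) = 1 or f(φ + απ/2) = 1. Then for every Borel probability measure μ on (ℝ/2πℤ) × {0,1} (where a point (φ, b) denotes the b-bag with midpoint φ), there exists a classifier f which is either the constant-0 function or a homogeneous halfspace classifier of the form φ ↦ pos(cos(φ − ψ)) for some ψ ∈ ℝ, such that the μ-measure of the set of bags satisfied by f is at least 2/3 − (1 − α)/2. -/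
open MeasureTheory

/-!
A bag's midpoint and label being fixed, a uniformly random homogeneous halfspace satisfies a 0-bag
of half-width `a` with probability at least `1/2 - a/π` and a 1-bag of half-width `b` with
probability at least `1/2 + b/π`. Averaging over `μ`, some halfspace therefore satisfies `μ`-mass at
least `p (1/2 - a/π) + (1 - p) (1/2 + b/π)`, where `p` is the mass of the 0-bags. The constant
classifier `0` satisfies mass `p`, and the larger of the two quantities is smallest when they agree.
-/

section Averaging

variable {X Y : Type*} [MeasurableSpace X] [MeasurableSpace Y]

theorem integral_measureReal_prodMk_comm
    (ν : Measure X) (μ : Measure Y) [IsFiniteMeasure ν] [IsFiniteMeasure μ]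
    {S : Set (X × Y)} (hS : MeasurableSet S) :
    ∫ x, μ.real (Prod.mk x ⁻¹' S) ∂ν = ∫ y, ν.real ((·, y) ⁻¹' S) ∂μ := by
  simp only [measureReal_def]
  rw [integral_toReal (measurable_measure_prodMk_left hS).aemeasurable (by simp),
    integral_toReal (measurable_measure_prodMk_right hS).aemeasurable (by simp),
    ← Measure.prod_apply hS, ← Measure.prod_apply_symm hS]

theorem mul_measureReal_add_mul_measureReal_compl_le_integral
    {μ : Measure Y} [IsFiniteMeasure μ] {g : Y → ℝ}
    (hg : Integrable g μ) {F : Set Y} (hF : MeasurableSet F) {u v : ℝ}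
    (hu : ∀ y ∈ F, u ≤ g y) (hv : ∀ y ∉ F, v ≤ g y) :
    u * μ.real F + v * μ.real Fᶜ ≤ ∫ y, g y ∂μ := by
  rw [← integral_add_compl hF hg]
  exact add_le_add
    (setIntegral_ge_of_const_le_real hF (measure_ne_top μ F) hu hg.integrableOn)
    (setIntegral_ge_of_const_le_real hF.compl (measure_ne_top μ Fᶜ) hv hg.integrableOn)

theorem exists_mul_add_mul_le_measureReal_prodMk_preimage
    (ν : Measure X) (μ : Measure Y) [IsProbabilityMeasure ν] [IsFiniteMeasure μ]
    {S : Set (X × Y)} (hS : MeasurableSet S) {F : Set Y} (hF : MeasurableSet F) {u v : ℝ}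
    (hu : ∀ y ∈ F, u ≤ ν.real ((·, y) ⁻¹' S)) (hv : ∀ y ∉ F, v ≤ ν.real ((·, y) ⁻¹' S)) :
    ∃ x, u * μ.real F + v * μ.real Fᶜ ≤ μ.real (Prod.mk x ⁻¹' S) := by
  have integrable_left : Integrable (fun x ↦ μ.real (Prod.mk x ⁻¹' S)) ν :=
    Measure.integrable_measure_prodMk_left hS (measure_ne_top _ _)
  have integrable_right : Integrable (fun y ↦ ν.real ((·, y) ⁻¹' S)) μ :=
    Measure.integrable_measure_prodMk_left (measurable_swap hS) (measure_ne_top _ _)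
  obtain ⟨x, hx⟩ := exists_integral_le integrable_left
  refine ⟨x, le_trans ?_ hx⟩
  rw [integral_measureReal_prodMk_comm ν μ hS]
  exact mul_measureReal_add_mul_measureReal_compl_le_integral integrable_right hF hu hv

end Averaging

open AddCircle (haarAddCircle) in
theorem sub_div_le_haarAddCircle_real {T : ℝ} [hT : Fact (0 < T)] {A : Set (AddCircle T)} {x y : ℝ}
    (hxy : y ≤ x + T) (hA : ∀ θ ∈ Set.Ioo x y, (θ : AddCircle T) ∈ A) :
    (y - x) / T ≤ haarAddCircle.real A := by
  have volume_real : volume.real A = T * haarAddCircle.real A := by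
    rw [AddCircle.volume_eq_smul_haarAddCircle, measureReal_ennreal_smul_apply,
      ENNReal.toReal_ofReal hT.out.le]
  have ofReal_sub_le : ENNReal.ofReal (y - x) ≤ volume A := by
    have mk_preserving := AddCircle.measurePreserving_mk T x
    calc ENNReal.ofReal (y - x) = volume (Set.Ioo x y) := Real.volume_Ioo.symm
      _ ≤ volume.restrict (Set.Ioc x (x + T)) ((↑) ⁻¹' A) := by
        rw [Measure.restrict_apply' measurableSet_Ioc]
        exact measure_mono fun θ hθ ↦ ⟨hA θ hθ, hθ.1, hθ.2.le.trans hxy⟩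
      _ ≤ volume A := by
        rw [← mk_preserving.map_eq]
        exact Measure.le_map_apply mk_preserving.aemeasurable A
  rw [div_le_iff₀' hT.out, ← volume_real]
  exact (ENNReal.ofReal_le_iff_le_toReal (measure_ne_top _ _)).1 ofReal_sub_le

section SatisfiedBags

variable {G : Type*} [AddGroup G]

/-- The bags satisfied by the classifier `f`. A bag is encoded by its midpoint and its label; the
endpoints of a 0-bag are its midpoint `± a`, those of a 1-bag are its midpoint `± b`. -/
def satisfiedBags (a b : G) (f : G → Bool) : Set (G × Bool) :=
  {p | (p.2 = false ∧ f (p.1 - a) = false ∧ f (p.1 + a) = false) ∨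
    (p.2 = true ∧ (f (p.1 - b) = true ∨ f (p.1 + b) = true))}

theorem setOf_snd_eq_false_subset_satisfiedBags (a b : G) :
    {p : G × Bool | p.2 = false} ⊆ satisfiedBags a b fun _ ↦ false :=
  fun _ hp ↦ Or.inl ⟨hp, rfl, rfl⟩

theorem measurableSet_mem_satisfiedBags [MeasurableSpace G] [MeasurableAdd G]
    {X : Type*} [MeasurableSpace X] {f : X → G → Bool} (hf : Measurable (Function.uncurry f))
    (a b : G) : MeasurableSet {q : X × (G × Bool) | q.2 ∈ satisfiedBags a b (f q.1)} := by
  have measurable_label : Measurable fun q : X × (G × Bool) ↦ q.2.2 := by fun_prop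
  have measurable_add (c : G) : Measurable fun q : X × (G × Bool) ↦ f q.1 (q.2.1 + c) :=
    hf.comp (by fun_prop : Measurable fun q : X × (G × Bool) ↦ (q.1, q.2.1 + c))
  have measurable_sub (c : G) : Measurable fun q : X × (G × Bool) ↦ f q.1 (q.2.1 - c) := by
    simpa only [sub_eq_add_neg] using measurable_add (-c)
  exact ((measurable_label (measurableSet_singleton false)).inter
      ((measurable_sub a (measurableSet_singleton false)).inter
        (measurable_add a (measurableSet_singleton false)))).union
    ((measurable_label (measurableSet_singleton true)).inter
      ((measurable_sub b (measurableSet_singleton true)).union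
        (measurable_add b (measurableSet_singleton true))))

end SatisfiedBags

section Halfspace

open Real AddCircle

local notation "𝕋" => AddCircle (2 * π)

local instance fact_two_pi_pos : Fact (0 < 2 * π) := ⟨two_pi_pos⟩

/-- The homogeneous halfspace classifier with normal direction `ψ`. -/
noncomputable def halfspace (ψ φ : 𝕋) : Bool :=
  decide (0 < Angle.cos (φ - ψ))

theorem halfspace_coe (ψ φ : ℝ) : halfspace (ψ : 𝕋) (φ : 𝕋) = decide (0 < cos (φ - ψ)) :=
  rfl

theorem measurable_uncurry_halfspace : Measurable (Function.uncurry halfspace) := by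
  have continuous_cos_sub : Continuous fun q : 𝕋 × 𝕋 ↦ Angle.cos (q.2 - q.1) :=
    Angle.continuous_cos.comp (continuous_snd.sub continuous_fst)
  have preimage_true : Function.uncurry halfspace ⁻¹' {true} =
      {q : 𝕋 × 𝕋 | 0 < Angle.cos (q.2 - q.1)} := by
    ext q
    simp [halfspace, Function.uncurry]
  exact measurable_to_bool
    (preimage_true ▸ (isOpen_lt continuous_const continuous_cos_sub).measurableSet)

theorem sub_div_pi_le_haarAddCircle_real_zeroBag_mem_satisfiedBags
    {a : ℝ} (ha : 0 ≤ a) (b φ : 𝕋) :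
    1 / 2 - a / π ≤
      haarAddCircle.real {ψ : 𝕋 | (φ, false) ∈ satisfiedBags (a : 𝕋) b (halfspace ψ)} := by
  obtain ⟨r, rfl⟩ := QuotientAddGroup.mk_surjective φ
  have hπ := pi_pos
  have arc_satisfies (θ : ℝ) (hθ : θ ∈ Set.Ioo (r - 3 * π / 2 + a) (r - π / 2 - a)) :
      ((r : 𝕋), false) ∈ satisfiedBags (a : 𝕋) b (halfspace θ) := by
    have halfspace_eq_false {x : ℝ} (hx : |x - r| ≤ a) : halfspace (θ : 𝕋) (x : 𝕋) = false := by
      rw [halfspace_coe, decide_eq_false_iff_not, not_lt]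
      rw [abs_le] at hx
      exact cos_nonpos_of_pi_div_two_le_of_le (by linarith [hθ.2]) (by linarith [hθ.1])
    refine Or.inl ⟨rfl, halfspace_eq_false (x := r - a) ?_, halfspace_eq_false (x := r + a) ?_⟩ <;>
      simp [abs_of_nonneg ha]
  calc 1 / 2 - a / π = ((r - π / 2 - a) - (r - 3 * π / 2 + a)) / (2 * π) := by field
    _ ≤ _ := sub_div_le_haarAddCircle_real (by linarith) arc_satisfies

theorem add_div_pi_le_haarAddCircle_real_oneBag_mem_satisfiedBags
    {b : ℝ} (hb : b < π / 2) (a φ : 𝕋) :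
    1 / 2 + b / π ≤
      haarAddCircle.real {ψ : 𝕋 | (φ, true) ∈ satisfiedBags a (b : 𝕋) (halfspace ψ)} := by
  obtain ⟨r, rfl⟩ := QuotientAddGroup.mk_surjective φ
  have arc_satisfies (θ : ℝ) (hθ : θ ∈ Set.Ioo (r - π / 2 - b) (r + π / 2 + b)) :
      ((r : 𝕋), true) ∈ satisfiedBags a (b : 𝕋) (halfspace θ) := by
    refine Or.inr ⟨rfl, (le_total θ r).imp (fun hθr ↦ ?_) fun hrθ ↦ ?_⟩
    · exact decide_eq_true (cos_pos_of_mem_Ioo (x := r - b - θ)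
        ⟨by linarith, by linarith [hθ.1]⟩)
    · exact decide_eq_true (cos_pos_of_mem_Ioo (x := r + b - θ)
        ⟨by linarith [hθ.2], by linarith⟩)
  calc 1 / 2 + b / π = ((r + π / 2 + b) - (r - π / 2 - b)) / (2 * π) := by field
    _ ≤ _ := sub_div_le_haarAddCircle_real (by linarith) arc_satisfies

theorem exists_halfspace_le_measureReal_satisfiedBags {a b : ℝ} (ha : 0 ≤ a) (hb : b < π / 2)
    (μ : Measure (𝕋 × Bool)) [IsFiniteMeasure μ] :
    ∃ ψ : ℝ, (1 / 2 - a / π) * μ.real {p | p.2 = false} +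
        (1 / 2 + b / π) * μ.real {p | p.2 = false}ᶜ ≤
      μ.real (satisfiedBags (a : 𝕋) (b : 𝕋) (halfspace ψ)) := by
  obtain ⟨ψ, hψ⟩ := exists_mul_add_mul_le_measureReal_prodMk_preimage haarAddCircle μ
    (measurableSet_mem_satisfiedBags measurable_uncurry_halfspace (a : 𝕋) (b : 𝕋))
    (measurable_snd (measurableSet_singleton false))
    (u := 1 / 2 - a / π) (v := 1 / 2 + b / π)
    (by
      rintro ⟨φ, _⟩ rfl
      exact sub_div_pi_le_haarAddCircle_real_zeroBag_mem_satisfiedBags ha _ φ)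
    (by
      rintro ⟨φ, label⟩ hlabel
      obtain rfl : label = true := Bool.eq_true_of_not_eq_false hlabel
      exact add_div_pi_le_haarAddCircle_real_oneBag_mem_satisfiedBags hb _ φ)
  obtain ⟨r, rfl⟩ := QuotientAddGroup.mk_surjective ψ
  exact ⟨r, hψ⟩

theorem mil_weak_classifier_exists_general {a b : ℝ} (ha : 0 ≤ a) (hab : 0 ≤ a + b)
    (hb : b < π / 2) (μ : Measure (𝕋 × Bool)) [IsProbabilityMeasure μ] :
    ∃ f : 𝕋 → Bool,
      ((∀ φ, f φ = false) ∨ ∃ ψ : ℝ, ∀ φ : ℝ, f (φ : 𝕋) = decide (0 < cos (φ - ψ))) ∧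
      ENNReal.ofReal ((π / 2 + b) / (π + a + b)) ≤ μ (satisfiedBags (a : 𝕋) (b : 𝕋) f) := by
  set p := μ.real {q : 𝕋 × Bool | q.2 = false} with hp
  have hπ := pi_pos
  have real_compl : μ.real {q : 𝕋 × Bool | q.2 = false}ᶜ = 1 - p :=
    probReal_compl_eq_one_sub (measurable_snd (measurableSet_singleton false))
  rcases le_total ((π / 2 + b) / (π + a + b)) p with hcp | hpc
  · exact ⟨fun _ ↦ false, Or.inl fun _ ↦ rfl, (ENNReal.ofReal_le_of_le_toReal hcp).trans
      (measure_mono (setOf_snd_eq_false_subset_satisfiedBags _ _))⟩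
  · obtain ⟨ψ, hψ⟩ := exists_halfspace_le_measureReal_satisfiedBags ha hb μ
    refine ⟨halfspace ψ, Or.inr ⟨ψ, halfspace_coe ψ⟩,
      ENNReal.ofReal_le_of_le_toReal (le_trans ?_ hψ)⟩
    rw [real_compl, ← hp]
    calc (π / 2 + b) / (π + a + b)
        = 1 / 2 + b / π - (a + b) / π * ((π / 2 + b) / (π + a + b)) := by
          have : π + a + b ≠ 0 := by linarith
          field
      _ ≤ 1 / 2 + b / π - (a + b) / π * p := by gcongr
      _ = (1 / 2 - a / π) * p + (1 / 2 + b / π) * (1 - p) := by ring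

end Halfspace

/-- Existence of a weak classifier for the continuous MIL construction on the circle
`ℝ/2πℤ`: for every Borel probability measure `μ` on bags (a bag is a midpoint `φ` together
with a label `b : Bool`; the 0-bag has endpoints `φ ± (1-α)π/2` and the 1-bag has endpoints
`φ ± απ/2`), there is a classifier `f` — either the constant-0 classifier or a homogeneous
halfspace `φ ↦ pos (cos (φ - ψ))` — whose satisfied bags have `μ`-measure at least
`2/3 - (1-α)/2`. -/
theorem mil_weak_classifier_exists (α : ℝ) (hα₁ : 1 / 2 < α) (hα₂ : α < 1)
    (μ : Measure (AddCircle (2 * Real.pi) × Bool)) [IsProbabilityMeasure μ] :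
    ∃ f : AddCircle (2 * Real.pi) → Bool,
      ((∀ φ, f φ = false) ∨
        ∃ ψ : ℝ, ∀ φ : ℝ, f (φ : AddCircle (2 * Real.pi)) =
          decide (0 < Real.cos (φ - ψ))) ∧
      ENNReal.ofReal (2 / 3 - (1 - α) / 2) ≤
        μ {p : AddCircle (2 * Real.pi) × Bool |
          (p.2 = false ∧
            f (p.1 - (((1 - α) * Real.pi / 2 : ℝ) : AddCircle (2 * Real.pi))) = false ∧
            f (p.1 + (((1 - α) * Real.pi / 2 : ℝ) : AddCircle (2 * Real.pi))) = false) ∨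
          (p.2 = true ∧
            (f (p.1 - ((α * Real.pi / 2 : ℝ) : AddCircle (2 * Real.pi))) = true ∨
             f (p.1 + ((α * Real.pi / 2 : ℝ) : AddCircle (2 * Real.pi))) = true))} := by
  have hπ := Real.pi_pos
  obtain ⟨f, hf, hμf⟩ := mil_weak_classifier_exists_general
    (a := (1 - α) * Real.pi / 2) (b := α * Real.pi / 2) (by nlinarith) (by linarith)
    (by nlinarith) μ
  refine ⟨f, hf, (ENNReal.ofReal_le_ofReal ?_).trans hμf⟩
  rw [le_div_iff₀ (by linarith)]
  nlinarith
end

section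
/- Let α ∈ (1/2, 1), let λ denote the normalized Haar probability measure on the additive circle ℝ/2πℤ, and let f : ℝ/2πℤ → {0,1} be Borel measurable. Then (1/2)·[ λ{ φ : f(φ − (1−α)π/2) = 0 and f(φ + (1−α)π/2) = 0 } + λ{ φ : f(φ − απ/2) = 1 or f(φ + απ/2) = 1 } ] ≤ 3/4. In words: under the uniform distribution on bag midpoints with equal mass on 0-bags and 1-bags, no classifier of the points of the circle satisfies more than a 3/4 fraction of the MIL bags. -/
open MeasureTheory

/-!
Let 0-bags have half-width `a` and 1-bags half-width `b`. Three bags form a chain: the right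
endpoint of the 0-bag with midpoint `φ` is the left endpoint of the 1-bag with midpoint
`φ + (a + b)`, whose right endpoint is the left endpoint of the 0-bag with midpoint
`φ + (a + b + b + a)`; this order of the summands makes the endpoints match in a noncommutative
group. If both 0-bags are satisfied, both endpoints of the 1-bag are labelled `0`, so the 1-bag is
not. By invariance of the measure, the fractions `z` and `o` of satisfied 0-bags and 1-bags
therefore obey `2 z + o ≤ 2`, and with `o ≤ 1` this gives `z + o ≤ 3 / 2`.
-/

theorem two_mul_measureReal_le_univ_add_inter_preimage {X : Type*} [MeasurableSpace X]
    {μ : Measure X} [IsFiniteMeasure μ] {T : X → X} (hT : MeasurePreserving T μ μ) {s : Set X}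
    (hs : MeasurableSet s) :
    2 * μ.real s ≤ μ.real Set.univ + μ.real (s ∩ T ⁻¹' s) :=
  calc
    2 * μ.real s = μ.real s + μ.real (T ⁻¹' s) := by
      rw [hT.measureReal_preimage hs.nullMeasurableSet, two_mul]
    _ = μ.real (s ∪ T ⁻¹' s) + μ.real (s ∩ T ⁻¹' s) :=
      (measureReal_union_add_inter (hT.measurable hs)).symm
    _ ≤ μ.real Set.univ + μ.real (s ∩ T ⁻¹' s) :=
      add_le_add (measureReal_mono (Set.subset_univ _)) le_rfl

section Bags

variable {G : Type*} [AddGroup G]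

/-- The set of midpoints `φ` of the 0-bags `φ ± a` that the classifier `f` satisfies, with `false`
and `true` encoding the labels `0` and `1`. -/
def satisfiedZeroBags (f : G → Bool) (a : G) : Set G :=
  {φ | f (φ - a) = false ∧ f (φ + a) = false}

/-- The set of midpoints `φ` of the 1-bags `φ ± b` that the classifier `f` satisfies, with `false`
and `true` encoding the labels `0` and `1`. -/
def satisfiedOneBags (f : G → Bool) (b : G) : Set G :=
  {φ | f (φ - b) = true ∨ f (φ + b) = true}

theorem add_notMem_satisfiedOneBags {f : G → Bool} {a b φ : G} (h : φ ∈ satisfiedZeroBags f a)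
    (h' : φ + (a + b + b + a) ∈ satisfiedZeroBags f a) :
    φ + (a + b) ∉ satisfiedOneBags f b := by
  have left_endpoint : φ + (a + b) - b = φ + a := by simp [← add_assoc]
  have right_endpoint : φ + (a + b) + b = φ + (a + b + b + a) - a := by simp [← add_assoc]
  rintro (hl | hr)
  · rw [left_endpoint, h.2] at hl
    contradiction
  · rw [right_endpoint, h'.1] at hr
    contradiction

variable [MeasurableSpace G] [MeasurableAdd G]

theorem measurableSet_satisfiedZeroBags {f : G → Bool} (hf : Measurable f) (a : G) :
    MeasurableSet (satisfiedZeroBags f a) := by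
  have label_false : MeasurableSet (f ⁻¹' {false}) := hf (measurableSet_singleton false)
  simp only [satisfiedZeroBags, sub_eq_add_neg]
  exact (measurable_add_const (-a) label_false).inter (measurable_add_const a label_false)

theorem two_mul_measureReal_satisfiedZeroBags_add_le (μ : Measure G) [IsFiniteMeasure μ]
    [μ.IsAddRightInvariant] {f : G → Bool} (hf : Measurable f) (a b : G) :
    2 * μ.real (satisfiedZeroBags f a) + μ.real (satisfiedOneBags f b) ≤ 2 * μ.real Set.univ := by
  set Z := satisfiedZeroBags f a
  set O := satisfiedOneBags f b
  have hZ : MeasurableSet Z := measurableSet_satisfiedZeroBags hf a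
  set ZZ := Z ∩ (· + (a + b + b + a)) ⁻¹' Z
  have hZZ : MeasurableSet ZZ := hZ.inter (measurable_add_const _ hZ)
  have disjoint : Disjoint ((· + (a + b)) ⁻¹' O) ZZ :=
    Set.disjoint_right.2 fun _ h ↦ add_notMem_satisfiedOneBags h.1 h.2
  have zero_bags : 2 * μ.real Z ≤ μ.real Set.univ + μ.real ZZ :=
    two_mul_measureReal_le_univ_add_inter_preimage (measurePreserving_add_right μ _) hZ
  have one_bags : μ.real O + μ.real ZZ ≤ μ.real Set.univ :=
    calc
      μ.real O + μ.real ZZ = μ.real ((· + (a + b)) ⁻¹' O) + μ.real ZZ := by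
        simp only [measureReal_def, measure_preimage_add_right]
      _ = μ.real ((· + (a + b)) ⁻¹' O ∪ ZZ) := (measureReal_union disjoint hZZ).symm
      _ ≤ μ.real Set.univ := measureReal_mono (Set.subset_univ _)
  linarith

theorem mil_no_strong_classifier_general (μ : Measure G) [IsProbabilityMeasure μ]
    [μ.IsAddRightInvariant] {f : G → Bool} (hf : Measurable f) (a b : G) :
    (1 / 2 : ℝ) * (μ.real (satisfiedZeroBags f a) + μ.real (satisfiedOneBags f b)) ≤ 3 / 4 := by
  have chain := two_mul_measureReal_satisfiedZeroBags_add_le μ hf a b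
  rw [probReal_univ] at chain
  have one_bags_le_one : μ.real (satisfiedOneBags f b) ≤ 1 := measureReal_le_one
  linarith

end Bags

/-- No strong classifier for the continuous MIL construction on the circle `ℝ/2πℤ`: for any
measurable classifier `f`, under the uniform distribution on bag midpoints (with equal mass
on 0-bags, whose endpoints are `φ ± (1-α)π/2`, and 1-bags, whose endpoints are `φ ± απ/2`),
the fraction of satisfied bags is at most `3/4`. Here `λ` is the normalized Haar probability
measure on `ℝ/2πℤ`. -/
theorem mil_no_strong_classifier (α : ℝ) (hα₁ : 1 / 2 < α) (hα₂ : α < 1)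
    [Fact (0 < 2 * Real.pi)]
    (f : AddCircle (2 * Real.pi) → Bool) (hf : Measurable f) :
    (1 / 2 : ℝ) *
      (((AddCircle.haarAddCircle : Measure (AddCircle (2 * Real.pi)))
          {φ | f (φ - (((1 - α) * Real.pi / 2 : ℝ) : AddCircle (2 * Real.pi))) = false ∧
               f (φ + (((1 - α) * Real.pi / 2 : ℝ) : AddCircle (2 * Real.pi))) = false}).toReal +
       ((AddCircle.haarAddCircle : Measure (AddCircle (2 * Real.pi)))
          {φ | f (φ - ((α * Real.pi / 2 : ℝ) : AddCircle (2 * Real.pi))) = true ∨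
               f (φ + ((α * Real.pi / 2 : ℝ) : AddCircle (2 * Real.pi))) = true}).toReal)
      ≤ 3 / 4 :=
  mil_no_strong_classifier_general AddCircle.haarAddCircle hf _ _
end
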